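/- Let G be a finite undirected simple graph with n vertices that is a forest (contains no cycles), and let ℓ be a degree labeling of G, i.e., a bijection ℓ : V → {1, …, n} arising from an enumeration u_1, …, u_n of V with ℓ(u_i) = i such that for each i, the vertex u_i has minimum degree in the subgraph induced by {u_i, u_{i+1}, …, u_n}. Then the set of initial valid triplets is empty: there is no triplet ⟨x, u, y⟩ with x, y ∈ Adj(u), ℓ(u) < ℓ(x) < ℓ(y), and (x, y) ∉ E. -/

import Mathlib

/-!
In a finite forest, a vertex at which a longest path starts has at most one neighbour: all its
neighbours lie on the path, and acyclicity forces each of them to be the second vertex. Hence a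
vertex of minimum degree in a finite induced subgraph of a forest has at most one neighbour there.
In a degree labeling, every vertex therefore has at most one neighbour with a larger label, whereas
the middle vertex of a triplet would have two.
-/

open SimpleGraph

section

variable {V : Type*} {G : SimpleGraph V}

theorem exists_neighborSet_subsingleton_of_isAcyclic [Nonempty V] [Finite G.edgeSet]
    (hG : G.IsAcyclic) : ∃ v, (G.neighborSet v).Subsingleton := by
  obtain ⟨u, v, p, hp, hmax⟩ := Walk.exists_isPath_forall_isPath_length_le_length G
  have mem_support_of_adj {w : V} (huw : G.Adj u w) : w ∈ p.support := by
    by_contra hw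
    have hle := hmax w v (.cons huw.symm p) (hp.cons hw)
    rw [Walk.length_cons] at hle
    omega
  have eq_snd {w : V} (huw : G.Adj u w) : w = p.snd :=
    hG.eq_snd_of_adj_start hp huw (mem_support_of_adj huw)
  exact ⟨u, fun x hx y hy => (eq_snd hx).trans (eq_snd hy).symm⟩

theorem exists_mem_inter_neighborSet_subsingleton_of_isAcyclic (hG : G.IsAcyclic) {S : Set V}
    (hfin : S.Finite) (hne : S.Nonempty) : ∃ v ∈ S, (S ∩ G.neighborSet v).Subsingleton := by
  have := hfin.to_subtype
  have := hne.to_subtype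
  obtain ⟨v, hv⟩ := exists_neighborSet_subsingleton_of_isAcyclic (hG.induce S)
  refine ⟨v, v.2, fun x hx y hy => ?_⟩
  exact congrArg Subtype.val (@hv ⟨x, hx.1⟩ hx.2 ⟨y, hy.1⟩ hy.2)

theorem inter_neighborSet_subsingleton_of_forall_ncard_le (hG : G.IsAcyclic) {S : Set V}
    (hfin : S.Finite) {u : V} (hu : u ∈ S)
    (hmin : ∀ v ∈ S, (S ∩ G.neighborSet u).ncard ≤ (S ∩ G.neighborSet v).ncard) :
    (S ∩ G.neighborSet u).Subsingleton := by
  have := hfin.to_subtype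
  obtain ⟨v, hvS, hv⟩ := exists_mem_inter_neighborSet_subsingleton_of_isAcyclic hG hfin ⟨u, hu⟩
  rw [← Set.ncard_le_one_iff_subsingleton] at hv ⊢
  exact (hmin v hvS).trans hv

end

theorem stmt12_general {V ι : Type*} [Preorder ι] [LocallyFiniteOrderTop ι] (G : SimpleGraph V)
    (hG : G.IsAcyclic) (e : ι ≃ V)
    (hdeg : ∀ i j : ι, i ≤ j →
      {w | (∃ m, i ≤ m ∧ e m = w) ∧ G.Adj (e i) w}.ncard ≤
      {w | (∃ m, i ≤ m ∧ e m = w) ∧ G.Adj (e j) w}.ncard)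
    {x u y : V} (hux : G.Adj u x) (huy : G.Adj u y)
    (hx : e.symm u ≤ e.symm x) (hy : e.symm u ≤ e.symm y) : x = y := by
  obtain ⟨i, rfl⟩ := e.surjective u
  rw [e.symm_apply_apply] at hx hy
  have hsub : (e '' Set.Ici i ∩ G.neighborSet (e i)).Subsingleton := by
    refine inter_neighborSet_subsingleton_of_forall_ncard_le hG ((Set.finite_Ici i).image e)
      (Set.mem_image_of_mem e Set.self_mem_Ici) ?_
    rintro _ ⟨j, hij, rfl⟩
    exact hdeg i j hij
  exact hsub ⟨⟨e.symm x, hx, e.apply_symm_apply x⟩, hux⟩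
    ⟨⟨e.symm y, hy, e.apply_symm_apply y⟩, huy⟩

/-- Let G be a finite forest (acyclic graph) and let ℓ be a
degree labeling of G, arising from an enumeration e : Fin n ≃ V (u_i = e i,
ℓ(u_i) = i, so ℓ = e.symm) in which each u_i has minimum degree in the subgraph
induced by {u_i, …, u_n}. Then there is no initial valid triplet ⟨x, u, y⟩,
i.e. no x, u, y with x, y ∈ Adj(u), ℓ(u) < ℓ(x) < ℓ(y) and (x, y) ∉ E. -/
theorem stmt12 {V : Type*} [Fintype V] (G : SimpleGraph V) (hG : G.IsAcyclic)
    (e : Fin (Fintype.card V) ≃ V)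
    (hdeg : ∀ i j : Fin (Fintype.card V), i ≤ j →
      {w | (∃ m, i ≤ m ∧ e m = w) ∧ G.Adj (e i) w}.ncard ≤
      {w | (∃ m, i ≤ m ∧ e m = w) ∧ G.Adj (e j) w}.ncard) :
    ¬ ∃ x u y : V, G.Adj u x ∧ G.Adj u y ∧
        e.symm u < e.symm x ∧ e.symm x < e.symm y ∧ ¬ G.Adj x y := by
  rintro ⟨x, u, y, hux, huy, hx, hxy, -⟩
  exact hxy.ne (congrArg e.symm (stmt12_general G hG e hdeg hux huy hx.le (hx.trans hxy).le))
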